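/- Let m ≥ 2 and let a be a divisor of m. Let e = a², or e = 3a² provided that 3 | m and 3 ∤ a. Then there exists a subgroup G of M with |G| = 6e such that N(G) has order e, π(G) = S₃, and |N(G) ∩ H_i| = a for each i ∈ {1,2,3}. -/

import Mathlib

/-- `V = (ZMod m)³`, written multiplicatively. -/
abbrev Vgrp (m : ℕ) : Type := Fin 3 → Multiplicative (ZMod m)

/-- The diagonal embedding `ZMod m → (ZMod m)³`. -/
def diagHom (m : ℕ) : Multiplicative (ZMod m) →* Vgrp m :=
  MonoidHom.mk' (fun t _ => t) (fun _ _ => rfl)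

/-- The diagonal subgroup `Δ = {(t,t,t)}` of `(ZMod m)³`. -/
def Δgrp (m : ℕ) : Subgroup (Vgrp m) := (diagHom m).range

/-- `W = (ZMod m)³ ⧸ Δ`. -/
abbrev Wgrp (m : ℕ) : Type := Vgrp m ⧸ Δgrp m

/-- The action of `S₃ = Equiv.Perm (Fin 3)` on `(ZMod m)³` permuting the coordinates. -/
def permV (m : ℕ) : Equiv.Perm (Fin 3) →* MulAut (Vgrp m) :=
  MonoidHom.mk'
    (fun σ => MulEquiv.arrowCongr σ (MulEquiv.refl (Multiplicative (ZMod m))))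
    (fun σ τ => by ext v i; rfl)

lemma permV_map_diag (m : ℕ) (σ : Equiv.Perm (Fin 3)) :
    (Δgrp m).map (permV m σ) = Δgrp m := by
  ext v
  constructor
  · rintro ⟨_, ⟨t, rfl⟩, rfl⟩
    exact ⟨t, rfl⟩
  · rintro ⟨t, rfl⟩
    exact ⟨diagHom m t, ⟨t, rfl⟩, rfl⟩

/-- The action of `S₃` on `W`, permuting the three coordinates (well defined since
`Δ` is invariant). -/
def permW (m : ℕ) : Equiv.Perm (Fin 3) →* MulAut (Wgrp m) :=
  MonoidHom.mk'
    (fun σ => QuotientGroup.congr (Δgrp m) (Δgrp m) (permV m σ) (permV_map_diag m σ))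
    (fun σ τ => by
      ext x
      refine QuotientGroup.induction_on x (fun v => ?_)
      rfl)

/-- `M = W ⋊ S₃`. -/
abbrev Mgrp (m : ℕ) : Type := Wgrp m ⋊[permW m] Equiv.Perm (Fin 3)

/-- `N(G) = G ∩ W`, where `W` is identified with the kernel of the projection
`π = rightHom : M → S₃` (i.e. with `W × {1} ≤ M`). -/
def NG {m : ℕ} (G : Subgroup (Mgrp m)) : Subgroup (Mgrp m) :=
  G ⊓ (SemidirectProduct.rightHom : Mgrp m →* Equiv.Perm (Fin 3)).ker

/-- The subgroup of `V = (ZMod m)³` of triples whose two coordinates with index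
different from `i` are equal. -/
def HV (m : ℕ) (i : Fin 3) : Subgroup (Vgrp m) :=
  MonoidHom.ker (MonoidHom.mk' (fun v : Vgrp m => v (i + 1) / v (i + 2))
    (fun _ _ => mul_div_mul_comm _ _ _ _))

/-- `H_i ≤ W`: classes of triples whose two coordinates with index different
from `i` are equal. -/
def Hsub (m : ℕ) (i : Fin 3) : Subgroup (Wgrp m) :=
  (HV m i).map (QuotientGroup.mk' (Δgrp m))

/-- `H_i`, identified with the subgroup `H_i × {1}` of `M`. -/
def HsubM (m : ℕ) (i : Fin 3) : Subgroup (Mgrp m) :=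
  (Hsub m i).map (SemidirectProduct.inl : Wgrp m →* Mgrp m)

/-
Let `T ≤ W` be a subgroup that is stable under `S₃`, has order prime to `a`, and meets every `Hᵢ`
trivially, and let `K = {w | wᵃ ∈ T}`. Every automorphism commutes with the `a`-th power map, so
`K` is again stable, and `G = K ⋊ S₃` has `N(G) = K`. The `a`-th power map sends `K` onto `T` with
kernel `W[a]`, and `W ≃ (ZMod m)²`, so `|K| = |T| a²`; as `T ∩ Hᵢ = 1`, the intersection `K ∩ Hᵢ`
is the `a`-torsion of the cyclic group `Hᵢ`, of order `a`. Taking `T = 1` gives `e = a²`. If `3 ∣ m`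
and `3 ∤ a`, the classes of `(1, u, u²)` with `u³ = 1` form a suitable `T` of order 3, stable
because every permutation of `ZMod 3` is affine; this gives `e = 3a²`.
-/

section Group

open Subgroup

variable {A B : Type*} [Group A] [Group B]

theorem card_inf_ker_mul_card_map (f : A →* B) (K : Subgroup A) :
    Nat.card ↥(K ⊓ f.ker) * Nat.card (K.map f) = Nat.card K := by
  rw [← relIndex_ker, ← relIndex_bot_left, ← relIndex_bot_left K, inf_comm,
    relIndex_inf_mul_relIndex, bot_inf_eq]

theorem card_comap_of_le_range {f : A →* B} {T : Subgroup B} (hT : T ≤ f.range) :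
    Nat.card (T.comap f) = Nat.card T * Nat.card f.ker := by
  rw [← card_inf_ker_mul_card_map f, inf_eq_right.mpr (ker_le_comap f T), map_comap_eq_self hT,
    mul_comm]

end Group

section CommGroup

open Subgroup

variable {A B : Type*} [CommGroup A] [CommGroup B]

theorem le_range_powMonoidHom_of_coprime {T : Subgroup A} {n : ℕ} (h : (Nat.card T).Coprime n) :
    T ≤ (powMonoidHom n : A →* A).range := by
  intro t ht
  obtain ⟨s, hs⟩ := (powCoprime h).surjective ⟨t, ht⟩
  exact ⟨s, congrArg Subtype.val hs⟩

theorem map_powMonoidHom_ker_of_injective {f : A →* B} (hf : Function.Injective f) (n : ℕ) :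
    (powMonoidHom n : A →* A).ker.map f = f.range ⊓ (powMonoidHom n : B →* B).ker := by
  have h : (powMonoidHom n : A →* A).ker = (powMonoidHom n : B →* B).ker.comap f := by
    ext x
    simp only [MonoidHom.mem_ker, mem_comap, powMonoidHom_apply, ← map_pow,
      map_eq_one_iff f hf]
  rw [h, map_comap_eq]

theorem powMonoidHom_ker_prod (n : ℕ) :
    (powMonoidHom n : A × B →* A × B).ker =
      (powMonoidHom n : A →* A).ker.prod (powMonoidHom n : B →* B).ker := by
  ext x
  simp only [MonoidHom.mem_ker, mem_prod, powMonoidHom_apply, Prod.ext_iff, Prod.pow_fst,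
    Prod.pow_snd, Prod.fst_one, Prod.snd_one]

theorem comap_powMonoidHom_inf_of_disjoint {T H : Subgroup A} (h : Disjoint T H) (n : ℕ) :
    T.comap (powMonoidHom n) ⊓ H = H ⊓ (powMonoidHom n : A →* A).ker := by
  ext x
  simp only [mem_inf, mem_comap, MonoidHom.mem_ker, and_comm (a := _ ∈ T)]
  refine and_congr_right fun hx => ⟨fun hT => disjoint_def.mp h hT (H.pow_mem hx n), ?_⟩
  exact fun hker => hker ▸ T.one_mem

theorem map_mem_comap_powMonoidHom {F : Type*} [FunLike F A A] [MonoidHomClass F A A] {f : F}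
    {T : Subgroup A} (hT : ∀ t ∈ T, f t ∈ T) (n : ℕ) :
    ∀ w ∈ T.comap (powMonoidHom n), f w ∈ T.comap (powMonoidHom n) := by
  intro w hw
  have h : f (w ^ n) ∈ T := hT _ hw
  rwa [map_pow] at h

end CommGroup

section SemidirectProduct

variable {N Q : Type*} [Group N] [Group Q] {φ : Q →* MulAut N}

/-- The subgroup `K ⋊ Q` of `N ⋊[φ] Q`, for a subgroup `K` of `N` that is stable under the action
of `Q`. -/
def stableSemidirect (K : Subgroup N) (hK : ∀ q, ∀ n ∈ K, φ q n ∈ K) : Subgroup (N ⋊[φ] Q) where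
  carrier := {g | g.left ∈ K}
  one_mem' := K.one_mem
  mul_mem' hx hy := K.mul_mem hx (hK _ _ hy)
  inv_mem' hx := hK _ _ (K.inv_mem hx)

variable (K : Subgroup N) (hK : ∀ q, ∀ n ∈ K, φ q n ∈ K)

theorem map_rightHom_stableSemidirect :
    (stableSemidirect K hK).map SemidirectProduct.rightHom = ⊤ :=
  eq_top_iff.mpr fun q _ => ⟨SemidirectProduct.inr q, K.one_mem, rfl⟩

theorem stableSemidirect_inf_ker_rightHom :
    stableSemidirect K hK ⊓ SemidirectProduct.rightHom.ker = K.map SemidirectProduct.inl := by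
  ext g
  constructor
  · rintro ⟨hleft, hright⟩
    exact ⟨g.left, hleft, SemidirectProduct.ext rfl hright.symm⟩
  · rintro ⟨n, hn, rfl⟩
    exact ⟨hn, rfl⟩

end SemidirectProduct

section Wgrp

variable {m : ℕ}

theorem wgrp_mk_eq_mk_iff {v w : Vgrp m} :
    (v : Wgrp m) = w ↔ ∃ t : Multiplicative (ZMod m), ∀ i, v i * t = w i := by
  rw [QuotientGroup.eq]
  refine exists_congr fun t => ?_
  rw [eq_inv_mul_iff_mul_eq, funext_iff]
  rfl

theorem wgrp_mk_mem_Hsub_iff {i : Fin 3} {v : Vgrp m} :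
    (v : Wgrp m) ∈ Hsub m i ↔ v (i + 1) = v (i + 2) := by
  have hΔ : Δgrp m ≤ HV m i := by
    rintro _ ⟨t, rfl⟩
    exact div_self' t
  have h : (v : Wgrp m) ∈ Hsub m i ↔ v ∈ HV m i := by
    rw [← QuotientGroup.mk'_apply, ← Subgroup.mem_comap, Hsub,
      Subgroup.comap_map_eq_self (by rwa [QuotientGroup.ker_mk'])]
  exact h.trans div_eq_one

/-- The parametrization of `H_i` by `ZMod m`, sending `t` to the class of the triple with entry `t`
at `i` and trivial entries elsewhere. -/
def homologyHom (m : ℕ) (i : Fin 3) : Multiplicative (ZMod m) →* Wgrp m :=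
  (QuotientGroup.mk' (Δgrp m)).comp (MonoidHom.mulSingle (fun _ => Multiplicative (ZMod m)) i)

theorem homologyHom_injective (i : Fin 3) : Function.Injective (homologyHom m i) := by
  refine (injective_iff_map_eq_one _).mpr fun t ht => ?_
  obtain ⟨s, hs⟩ := wgrp_mk_eq_mk_iff.mp ht
  have hs_one : s = 1 := by simpa using hs (i + 1)
  simpa [hs_one] using hs i

theorem range_homologyHom (i : Fin 3) : (homologyHom m i).range = Hsub m i := by
  ext w
  constructor
  · rintro ⟨t, rfl⟩
    refine wgrp_mk_mem_Hsub_iff.mpr ?_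
    fin_cases i <;> rfl
  · induction w using QuotientGroup.induction_on with | _ v
    intro hv
    refine ⟨v i / v (i + 1), wgrp_mk_eq_mk_iff.mpr ⟨v (i + 1), fun j => ?_⟩⟩
    have hv_eq := wgrp_mk_mem_Hsub_iff.mp hv
    fin_cases i <;> fin_cases j <;> simp_all

theorem homologyHom_coprod_bijective :
    Function.Bijective ((homologyHom m 0).coprod (homologyHom m 1)) := by
  constructor
  · refine (injective_iff_map_eq_one _).mpr fun ⟨x, y⟩ hxy => ?_
    obtain ⟨t, ht⟩ := wgrp_mk_eq_mk_iff.mp hxy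
    have ht_one : t = 1 := by simpa using ht 2
    ext
    · simpa [ht_one] using ht 0
    · simpa [ht_one] using ht 1
  · intro w
    induction w using QuotientGroup.induction_on with | _ v
    refine ⟨(v 0 / v 2, v 1 / v 2), wgrp_mk_eq_mk_iff.mpr ⟨v 2, fun j => ?_⟩⟩
    fin_cases j <;> simp

theorem card_torsion_zmod [NeZero m] {a : ℕ} (ha : a ∣ m) :
    Nat.card (powMonoidHom a : Multiplicative (ZMod m) →* Multiplicative (ZMod m)).ker = a := by
  have hcard : Nat.card (Multiplicative (ZMod m)) = m := Nat.card_zmod m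
  rw [IsCyclic.card_powMonoidHom_ker, hcard, Nat.gcd_eq_right ha]

theorem card_Hsub_inf_torsion [NeZero m] {a : ℕ} (ha : a ∣ m) (i : Fin 3) :
    Nat.card ↥(Hsub m i ⊓ (powMonoidHom a : Wgrp m →* Wgrp m).ker) = a := by
  rw [← range_homologyHom, ← map_powMonoidHom_ker_of_injective (homologyHom_injective i),
    Subgroup.card_map_of_injective (homologyHom_injective i), card_torsion_zmod ha]

theorem card_wgrp_torsion [NeZero m] {a : ℕ} (ha : a ∣ m) :
    Nat.card (powMonoidHom a : Wgrp m →* Wgrp m).ker = a ^ 2 := by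
  obtain ⟨hinj, hsurj⟩ := homologyHom_coprod_bijective (m := m)
  rw [← top_inf_eq (powMonoidHom a : Wgrp m →* Wgrp m).ker,
    ← MonoidHom.range_eq_top.mpr hsurj, ← map_powMonoidHom_ker_of_injective hinj,
    Subgroup.card_map_of_injective hinj, powMonoidHom_ker_prod,
    Nat.card_congr (Subgroup.prodEquiv _ _).toEquiv, Nat.card_prod, card_torsion_zmod ha, sq]

/-- The map `u ↦ [(1, u, u²)]` into `W`; on the elements with `u³ = 1` its image is stable under
`S₃`. -/
def geomClass (m : ℕ) : Multiplicative (ZMod m) →* Wgrp m :=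
  (QuotientGroup.mk' (Δgrp m)).comp (MonoidHom.pi fun i : Fin 3 => powMonoidHom (i : ℕ))

theorem geomClass_injective : Function.Injective (geomClass m) := by
  refine (injective_iff_map_eq_one _).mpr fun u hu => ?_
  obtain ⟨t, ht : ∀ i : Fin 3, u ^ (i : ℕ) * t = 1⟩ := wgrp_mk_eq_mk_iff.mp hu
  have ht_one : t = 1 := by simpa using ht 0
  simpa [ht_one] using ht 1

theorem perm_fin_three_affine (σ : Equiv.Perm (Fin 3)) :
    ∃ d c : ℕ, ∀ i, (σ i : ℕ) ≡ d * i + c [MOD 3] := by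
  refine ⟨σ 1 + 2 * σ 0, σ 0, ?_⟩
  decide +revert

theorem permW_geomClass (σ : Equiv.Perm (Fin 3)) : ∃ d : ℕ, ∀ u : Multiplicative (ZMod m),
    u ^ 3 = 1 → permW m σ (geomClass m u) = geomClass m (u ^ d) := by
  obtain ⟨d, c, haffine⟩ := perm_fin_three_affine σ⁻¹
  refine ⟨d, fun u hu => (wgrp_mk_eq_mk_iff.mpr ⟨u ^ c, fun i => ?_⟩).symm⟩
  calc (u ^ d) ^ (i : ℕ) * u ^ c = u ^ (d * i + c) := by rw [pow_add, pow_mul]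
    _ = u ^ ((σ⁻¹ i : Fin 3) : ℕ) := by
      rw [pow_eq_pow_mod _ hu, ← haffine i, ← pow_eq_pow_mod _ hu]

/-- The subgroup of `W` of classes of triples `(1, u, u²)` with `u³ = 1`. -/
def cubicSubgroup (m : ℕ) : Subgroup (Wgrp m) :=
  (powMonoidHom 3 : Multiplicative (ZMod m) →* Multiplicative (ZMod m)).ker.map (geomClass m)

theorem card_cubicSubgroup [NeZero m] (h : 3 ∣ m) : Nat.card (cubicSubgroup m) = 3 := by
  rw [cubicSubgroup, Subgroup.card_map_of_injective geomClass_injective, card_torsion_zmod h]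

theorem permW_mem_cubicSubgroup (σ : Equiv.Perm (Fin 3)) :
    ∀ w ∈ cubicSubgroup m, permW m σ w ∈ cubicSubgroup m := by
  rintro _ ⟨u, hu, rfl⟩
  obtain ⟨d, hd⟩ := permW_geomClass (m := m) σ
  exact ⟨u ^ d, Subgroup.pow_mem _ hu d, (hd u hu).symm⟩

theorem disjoint_cubicSubgroup_Hsub (i : Fin 3) : Disjoint (cubicSubgroup m) (Hsub m i) := by
  rw [Subgroup.disjoint_def]
  rintro _ ⟨u, hu, rfl⟩ hH
  have hu_cube : u ^ 3 = 1 := hu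
  have hpow : u ^ ((i + 1 : Fin 3) : ℕ) = u ^ ((i + 2 : Fin 3) : ℕ) := wgrp_mk_mem_Hsub_iff.mp hH
  have hmod : ((i + 2 : Fin 3) : ℕ) = (((i + 1 : Fin 3) : ℕ) + 1) % 3 := by
    fin_cases i <;> rfl
  have hstep : u ^ ((i + 2 : Fin 3) : ℕ) = u ^ ((i + 1 : Fin 3) : ℕ) * u := by
    rw [← pow_succ, pow_eq_pow_mod (_ + 1) hu_cube, hmod]
  rw [hstep, left_eq_mul] at hpow
  rw [hpow, map_one]

end Wgrp

section Mgrp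

variable {m : ℕ} (K : Subgroup (Wgrp m)) (hK : ∀ σ, ∀ w ∈ K, permW m σ w ∈ K)

theorem NG_stableSemidirect : NG (stableSemidirect K hK) = K.map SemidirectProduct.inl :=
  stableSemidirect_inf_ker_rightHom K hK

theorem card_NG_stableSemidirect : Nat.card (NG (stableSemidirect K hK)) = Nat.card K := by
  rw [NG_stableSemidirect, Subgroup.card_map_of_injective SemidirectProduct.inl_injective]

theorem card_NG_stableSemidirect_inf_HsubM (i : Fin 3) :
    Nat.card ↥(NG (stableSemidirect K hK) ⊓ HsubM m i) = Nat.card ↥(K ⊓ Hsub m i) := by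
  rw [NG_stableSemidirect, HsubM, ← Subgroup.map_inf _ _ _ SemidirectProduct.inl_injective,
    Subgroup.card_map_of_injective SemidirectProduct.inl_injective]

theorem card_eq_six_mul_card_NG {G : Subgroup (Mgrp m)}
    (hG : G.map (SemidirectProduct.rightHom : Mgrp m →* Equiv.Perm (Fin 3)) = ⊤) :
    Nat.card G = 6 * Nat.card (NG G) := by
  rw [← card_inf_ker_mul_card_map SemidirectProduct.rightHom G, hG, Subgroup.card_top,
    Nat.card_perm, Nat.card_fin, mul_comm]
  rfl

theorem exists_stable_disjoint_Hsub [NeZero m] {a e : ℕ}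
    (he : e = a ^ 2 ∨ (e = 3 * a ^ 2 ∧ 3 ∣ m ∧ ¬ 3 ∣ a)) :
    ∃ T : Subgroup (Wgrp m), (∀ σ, ∀ w ∈ T, permW m σ w ∈ T) ∧ (∀ i, Disjoint T (Hsub m i)) ∧
      (Nat.card T).Coprime a ∧ Nat.card T * a ^ 2 = e := by
  rcases he with rfl | ⟨rfl, h3m, h3a⟩
  · refine ⟨⊥, fun σ w hw => ?_, fun i => disjoint_bot_left, ?_, ?_⟩
    · rw [Subgroup.mem_bot.mp hw, map_one]
      exact Subgroup.one_mem _
    · rw [Subgroup.card_bot]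
      exact Nat.coprime_one_left a
    · rw [Subgroup.card_bot, one_mul]
  · refine ⟨cubicSubgroup m, permW_mem_cubicSubgroup, disjoint_cubicSubgroup_Hsub, ?_, ?_⟩
    · rwa [card_cubicSubgroup h3m, Nat.prime_three.coprime_iff_not_dvd]
    · rw [card_cubicSubgroup h3m]

end Mgrp

/-- Proposition 3.8(i) of Dalla Volta–Montanucci–Zini: existence of a subgroup
`G ≤ M` with `π(G) = S₃`, `|N(G)| = e` and `|N(G) ∩ H_i| = a` for each `i`,
where `e = a²`, or `e = 3a²` provided `3 ∣ m` and `3 ∤ a`. -/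
theorem stmt14 (m : ℕ) (hm : 2 ≤ m) (a e : ℕ) (ha : a ∣ m)
    (he : e = a ^ 2 ∨ (e = 3 * a ^ 2 ∧ 3 ∣ m ∧ ¬ 3 ∣ a)) :
    ∃ G : Subgroup (Mgrp m),
      Nat.card ↥G = 6 * e ∧
      Nat.card ↥(NG G) = e ∧
      G.map (SemidirectProduct.rightHom : Mgrp m →* Equiv.Perm (Fin 3)) = ⊤ ∧
      ∀ i : Fin 3, Nat.card ↥(NG G ⊓ HsubM m i) = a := by
  have : NeZero m := ⟨by lia⟩
  obtain ⟨T, hstable, hdisj, hcoprime, hcard⟩ := exists_stable_disjoint_Hsub (m := m) he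
  let K : Subgroup (Wgrp m) := T.comap (powMonoidHom a)
  have hK : ∀ σ, ∀ w ∈ K, permW m σ w ∈ K := fun σ =>
    map_mem_comap_powMonoidHom (hstable σ) a
  have hKcard : Nat.card K = e := by
    rw [card_comap_of_le_range (le_range_powMonoidHom_of_coprime hcoprime),
      card_wgrp_torsion ha, hcard]
  have hNG : Nat.card (NG (stableSemidirect K hK)) = e := by
    rw [card_NG_stableSemidirect, hKcard]
  have hπ := map_rightHom_stableSemidirect K hK
  refine ⟨stableSemidirect K hK, ?_, hNG, hπ, fun i => ?_⟩
  · rw [card_eq_six_mul_card_NG hπ, hNG]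
  · rw [card_NG_stableSemidirect_inf_HsubM, comap_powMonoidHom_inf_of_disjoint (hdisj i),
      card_Hsub_inf_torsion ha]
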